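/- Locality of LBV+cut: the general interaction rule i↓ (from C{◦} infer C[P,¬P]) is derivable from {ai↓, s}, i.e. for every structure P and context C{ } there is a derivation from C{◦} to C[P,¬P] using only ai↓ and s; dually, the general co-interaction rule i↑ (from C(P,¬P) infer C{◦}) is derivable from {ai↑, s}. -/

import Mathlib

/-!
Why the theorem holds: both general rules are reduced to their atomic forms by induction on `P`.
Derivations compose and are closed under contexts (`Deriv.trans`, `Deriv.fill`), so the ambient
context plays no role. For a compound `P` the inductive hypotheses produce the two smaller
interactions side by side, as `◦ = (◦,◦) ⟶ ([P,¬P],[Q,¬Q])`, and two switches merge them into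
`[(P,Q),[¬P,¬Q]]` (`deriv_merge`). Dually, two switches split `([P,Q],(¬P,¬Q))` into
`[(P,¬P),(Q,¬Q)]` (`deriv_split`), after which the inductive hypotheses consume both components.
-/

/-!
The deep-inference system LBV (the `BV`-free core system of the calculus of
structures of Guglielmi).  Structures are built from the unit `◦`, atoms `a`
and negated atoms `ā` by par `[P,Q]` and copar `(P,Q)`, and are identified
modulo the congruence generated by associativity, commutativity and the
unit laws `[P,◦]=P`, `(P,◦)=P`.  The rules `ai↓`, `s` (and the atomic cut
`ai↑`) apply inside an arbitrary one-hole context and modulo the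
equivalence.
-/

namespace LBV

/-- Structures: the unit `◦`, atoms, negated atoms, par `[P,Q]` and
copar `(P,Q)`. -/
inductive St : Type where
  | unit : St
  | pos  : ℕ → St
  | neg  : ℕ → St
  | par  : St → St → St
  | cop  : St → St → St
deriving DecidableEq

/-- Negation: `¬◦ = ◦`, `¬[P,Q] = (¬P,¬Q)`, `¬(P,Q) = [¬P,¬Q]`, `¬¬P = P`. -/
def St.negS : St → St
  | .unit => .unit
  | .pos a => .neg a
  | .neg a => .pos a
  | .par P Q => .cop P.negS Q.negS
  | .cop P Q => .par P.negS Q.negS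

/-- Atoms are the propositional symbols and their negations. -/
def St.isAtom : St → Prop
  | .pos _ => True
  | .neg _ => True
  | _ => False

/-- Syntactic equivalence of structures: the smallest congruence generated
by associativity and commutativity of par and copar and the unit laws
`[P,◦]=P` and `(P,◦)=P`. -/
inductive Equiv : St → St → Prop where
  | refl (P : St) : Equiv P P
  | symm {P Q : St} : Equiv P Q → Equiv Q P
  | trans {P Q R : St} : Equiv P Q → Equiv Q R → Equiv P R
  | parComm (P Q : St) : Equiv (.par P Q) (.par Q P)
  | copComm (P Q : St) : Equiv (.cop P Q) (.cop Q P)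
  | parAssoc (P Q R : St) : Equiv (.par (.par P Q) R) (.par P (.par Q R))
  | copAssoc (P Q R : St) : Equiv (.cop (.cop P Q) R) (.cop P (.cop Q R))
  | parUnit (P : St) : Equiv (.par P .unit) P
  | copUnit (P : St) : Equiv (.cop P .unit) P
  | parCongr {P P' Q Q' : St} :
      Equiv P P' → Equiv Q Q' → Equiv (.par P Q) (.par P' Q')
  | copCongr {P P' Q Q' : St} :
      Equiv P P' → Equiv Q Q' → Equiv (.cop P Q) (.cop P' Q')

/-- One-hole contexts. -/
inductive Ctx : Type where
  | hole : Ctx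
  | parL : Ctx → St → Ctx
  | parR : St → Ctx → Ctx
  | copL : Ctx → St → Ctx
  | copR : St → Ctx → Ctx

/-- Plugging a structure into the hole of a context. -/
def Ctx.fill : Ctx → St → St
  | .hole, P => P
  | .parL C Q, P => .par (C.fill P) Q
  | .parR Q C, P => .par Q (C.fill P)
  | .copL C Q, P => .cop (C.fill P) Q
  | .copR Q C, P => .cop Q (C.fill P)

/-- Names of the rules: interaction `ai↓`, co-interaction (atomic cut)
`ai↑`, and switch `s`. -/
inductive Rule : Type where
  | aiDown | aiUp | s
deriving DecidableEq

/-- The rules read at the root of a structure (premise on the left,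
conclusion on the right). -/
inductive RootStep : Rule → St → St → Prop where
  | aiDown (A : St) (h : A.isAtom) : RootStep .aiDown .unit (.par A A.negS)
  | aiUp (A : St) (h : A.isAtom) : RootStep .aiUp (.cop A A.negS) .unit
  | s (P Q R : St) : RootStep .s (.cop P (.par Q R)) (.par (.cop P Q) R)

/-- One inference step using a rule from the set `Rs`, applied inside an
arbitrary context and modulo the equivalence. -/
def Step (Rs : Set Rule) (P Q : St) : Prop :=
  ∃ r ∈ Rs, ∃ (C : Ctx) (P' Q' : St),
    RootStep r P' Q' ∧ Equiv P (C.fill P') ∧ Equiv (C.fill Q') Q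

/-- Derivations over an arbitrary step relation: a finite sequence of rule
instances from the premise to the conclusion (modulo the equivalence). -/
inductive Deriv (Stp : St → St → Prop) : St → St → Prop where
  | eqv {P Q : St} : Equiv P Q → Deriv Stp P Q
  | step {P Q R : St} : Stp P Q → Deriv Stp Q R → Deriv Stp P R

/-- The rules of the system LBV. -/
def LBVRules : Set Rule := {.aiDown, .s}

/-- Derivations in LBV. -/
def DerivLBV (P Q : St) : Prop := Deriv (Step LBVRules) P Q

/-- A proof of `Q` in LBV is a derivation from the unit `◦` to `Q`. -/
def ProofLBV (Q : St) : Prop := DerivLBV .unit Q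

end LBV

namespace LBV

/-- Composition of contexts: `C.comp D` is `C` with `D` plugged into its hole. -/
def Ctx.comp : Ctx → Ctx → Ctx
  | .hole, D => D
  | .parL C Q, D => .parL (C.comp D) Q
  | .parR Q C, D => .parR Q (C.comp D)
  | .copL C Q, D => .copL (C.comp D) Q
  | .copR Q C, D => .copR Q (C.comp D)

theorem Ctx.fill_comp (C D : Ctx) (P : St) : (C.comp D).fill P = C.fill (D.fill P) := by
  induction C <;> simp_all [Ctx.comp, Ctx.fill]

theorem Equiv.fill {P Q : St} (h : Equiv P Q) (C : Ctx) : Equiv (C.fill P) (C.fill Q) := by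
  induction C with
  | hole => exact h
  | parL C R ih => exact .parCongr ih (.refl R)
  | parR R C ih => exact .parCongr (.refl R) ih
  | copL C R ih => exact .copCongr ih (.refl R)
  | copR R C ih => exact .copCongr (.refl R) ih

theorem Step.fill {Rs : Set Rule} {P Q : St} (h : Step Rs P Q) (C : Ctx) :
    Step Rs (C.fill P) (C.fill Q) := by
  obtain ⟨r, hr, D, P', Q', hroot, hP, hQ⟩ := h
  refine ⟨r, hr, C.comp D, P', Q', hroot, ?_, ?_⟩
  · rw [Ctx.fill_comp]
    exact hP.fill C
  · rw [Ctx.fill_comp]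
    exact hQ.fill C

theorem Deriv.fill {Rs : Set Rule} {P Q : St} (h : Deriv (Step Rs) P Q) (C : Ctx) :
    Deriv (Step Rs) (C.fill P) (C.fill Q) := by
  induction h with
  | eqv e => exact .eqv (e.fill C)
  | step s _ ih => exact .step (s.fill C) ih

/-- A step may absorb an equivalence at its premise; a derivation of length zero absorbs it by
transitivity. -/
theorem Deriv.eqv_trans {Rs : Set Rule} {P Q R : St} (e : Equiv P Q)
    (h : Deriv (Step Rs) Q R) : Deriv (Step Rs) P R := by
  cases h with
  | eqv e' => exact .eqv (e.trans e')
  | step s d =>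
    obtain ⟨r, hr, D, P', Q', hroot, hP, hQ⟩ := s
    exact .step ⟨r, hr, D, P', Q', hroot, e.trans hP, hQ⟩ d

theorem Deriv.trans {Rs : Set Rule} {P Q R : St} (h₁ : Deriv (Step Rs) P Q)
    (h₂ : Deriv (Step Rs) Q R) : Deriv (Step Rs) P R := by
  induction h₁ with
  | eqv e => exact h₂.eqv_trans e
  | step s _ ih => exact .step s (ih h₂)

theorem Deriv.par {Rs : Set Rule} {P P' Q Q' : St} (h₁ : Deriv (Step Rs) P P')
    (h₂ : Deriv (Step Rs) Q Q') : Deriv (Step Rs) (.par P Q) (.par P' Q') :=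
  (h₁.fill (.parL .hole Q)).trans (h₂.fill (.parR P' .hole))

theorem Deriv.cop {Rs : Set Rule} {P P' Q Q' : St} (h₁ : Deriv (Step Rs) P P')
    (h₂ : Deriv (Step Rs) Q Q') : Deriv (Step Rs) (.cop P Q) (.cop P' Q') :=
  (h₁.fill (.copL .hole Q)).trans (h₂.fill (.copR P' .hole))

theorem Deriv.of_root {Rs : Set Rule} {r : Rule} (hr : r ∈ Rs) {P Q : St}
    (h : RootStep r P Q) : Deriv (Step Rs) P Q :=
  .step ⟨r, hr, .hole, P, Q, h, .refl P, .refl Q⟩ (.eqv (.refl Q))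

/-- Two switches merge two pars under a copar: `([P,P'],[Q,Q']) ⟶ [(P,Q),[P',Q']]`. -/
theorem deriv_merge {Rs : Set Rule} (hs : Rule.s ∈ Rs) (P P' Q Q' : St) :
    Deriv (Step Rs) (.cop (.par P P') (.par Q Q')) (.par (.cop P Q) (.par P' Q')) := by
  have first := Deriv.of_root hs (.s (.par P P') Q Q')
  have second := Deriv.of_root hs (.s Q P P')
  have inner : Deriv (Step Rs) (.cop (.par P P') Q) (.par (.cop P Q) P') :=
    (second.eqv_trans (.copComm _ _)).trans (.eqv (.parCongr (.copComm _ _) (.refl _)))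
  exact (first.trans (inner.par (.eqv (.refl Q')))).trans (.eqv (.parAssoc _ _ _))

/-- Two switches split a par against a copar: `([P,Q],(P',Q')) ⟶ [(P,P'),(Q,Q')]`. -/
theorem deriv_split {Rs : Set Rule} (hs : Rule.s ∈ Rs) (P P' Q Q' : St) :
    Deriv (Step Rs) (.cop (.par P Q) (.cop P' Q')) (.par (.cop P P') (.cop Q Q')) := by
  have first := Deriv.of_root hs (.s P' P Q)
  have second := Deriv.of_root hs (.s Q' Q (.cop P P'))
  have inner : Deriv (Step Rs) (.cop (.par P Q) P') (.par Q (.cop P P')) :=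
    (first.eqv_trans (.copComm _ _)).trans
      (.eqv ((Equiv.parComm _ _).trans (.parCongr (.refl _) (.copComm _ _))))
  have outer : Deriv (Step Rs) (.cop (.par Q (.cop P P')) Q') (.par (.cop P P') (.cop Q Q')) :=
    (second.eqv_trans (.copComm _ _)).trans
      (.eqv ((Equiv.parComm _ _).trans (.parCongr (.refl _) (.copComm _ _))))
  exact ((inner.cop (.eqv (.refl Q'))).trans outer).eqv_trans (.symm (.copAssoc _ _ _))

theorem deriv_interaction {Rs : Set Rule} (hai : Rule.aiDown ∈ Rs) (hs : Rule.s ∈ Rs) (P : St) :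
    Deriv (Step Rs) .unit (.par P P.negS) := by
  induction P with
  | unit => exact .eqv (.symm (.parUnit _))
  | pos a => exact .of_root hai (.aiDown (.pos a) trivial)
  | neg a => exact .of_root hai (.aiDown (.neg a) trivial)
  | par P Q ihP ihQ =>
    have ihP' := ihP.trans (.eqv (.parComm _ _))
    have ihQ' := ihQ.trans (.eqv (.parComm _ _))
    exact (((ihP'.cop ihQ').trans (deriv_merge hs _ _ _ _)).eqv_trans
      (.symm (.copUnit _))).trans (.eqv (.parComm _ _))
  | cop P Q ihP ihQ =>
    exact ((ihP.cop ihQ).trans (deriv_merge hs _ _ _ _)).eqv_trans (.symm (.copUnit _))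

theorem deriv_cointeraction {Rs : Set Rule} (hai : Rule.aiUp ∈ Rs) (hs : Rule.s ∈ Rs) (P : St) :
    Deriv (Step Rs) (.cop P P.negS) .unit := by
  induction P with
  | unit => exact .eqv (.copUnit _)
  | pos a => exact .of_root hai (.aiUp (.pos a) trivial)
  | neg a => exact .of_root hai (.aiUp (.neg a) trivial)
  | par P Q ihP ihQ =>
    exact ((deriv_split hs _ _ _ _).trans (ihP.par ihQ)).trans (.eqv (.parUnit _))
  | cop P Q ihP ihQ =>
    have ihP' := ihP.eqv_trans (.copComm _ _)
    have ihQ' := ihQ.eqv_trans (.copComm _ _)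
    exact (((deriv_split hs _ _ _ _).trans (ihP'.par ihQ')).trans
      (.eqv (.parUnit _))).eqv_trans (.copComm _ _)

/-- Locality of LBV+cut.
The general interaction rule `i↓` (from `C{◦}` infer `C[P,¬P]`) is derivable
from `{ai↓, s}`: for every structure `P` and context `C{ }` there is a
derivation from `C{◦}` to `C[P,¬P]` using only `ai↓` and `s`.  Dually, the
general co-interaction rule `i↑` (from `C(P,¬P)` infer `C{◦}`) is derivable
from `{ai↑, s}`. -/
theorem lbv_locality :
    (∀ (C : Ctx) (P : St),
      Deriv (Step {Rule.aiDown, Rule.s}) (C.fill .unit) (C.fill (.par P P.negS))) ∧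
    (∀ (C : Ctx) (P : St),
      Deriv (Step {Rule.aiUp, Rule.s}) (C.fill (.cop P P.negS)) (C.fill .unit)) := by
  exact ⟨fun C P => (deriv_interaction (by simp) (by simp) P).fill C,
    fun C P => (deriv_cointeraction (by simp) (by simp) P).fill C⟩

end LBV
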